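/- arXiv:2209.12897 — 2 statements merged into one kernel-verified Lean document; each statement's English description precedes it below -/
import Mathlib

section
/- Let n ≥ 1, β ≥ 0, and let g : ℝⁿ → [0,∞) be β-log-concave. Define G(x,t) := g(x/t)^t for x ∈ ℝⁿ and t > 0. Then for all t, t' > 0, all λ ∈ [0,1], and all x, x' ∈ ℝⁿ, one has G(λx + (1−λ)x', λt + (1−λ)t') ≥ (exp(−βt) · G(x,t))^λ · (exp(−βt') · G(x',t'))^{1−λ}. -/
open Real

/-- Pointwise Prékopa–Leindler-type inequality for `G(x,t) = g(x/t)^t` when `g` is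
`β`-log-concave. -/
theorem pointwise_G_ineq (n : ℕ) (hn : 1 ≤ n) (β : ℝ) (hβ : 0 ≤ β)
    (g : (Fin n → ℝ) → ℝ) (hg0 : ∀ x, 0 ≤ g x)
    (hlc : ∀ x y : Fin n → ℝ, ∀ l : ℝ, l ∈ Set.Icc (0:ℝ) 1 →
      Real.exp (-β) * g x ^ l * g y ^ (1 - l) ≤ g (l • x + (1 - l) • y))
    (G : (Fin n → ℝ) → ℝ → ℝ) (hG : ∀ x t, G x t = g (t⁻¹ • x) ^ t) :
    ∀ t t' : ℝ, 0 < t → 0 < t' → ∀ l : ℝ, l ∈ Set.Icc (0:ℝ) 1 →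
      ∀ x x' : Fin n → ℝ,
      (Real.exp (-β * t) * G x t) ^ l * (Real.exp (-β * t') * G x' t') ^ (1 - l)
        ≤ G (l • x + (1 - l) • x') (l * t + (1 - l) * t') := by
  intro t t' ht ht' l hl x x'
  obtain ⟨h0, h1⟩ := hl
  have h1' : 0 ≤ 1 - l := by linarith
  obtain ⟨s, hs⟩ : ∃ s, s = l * t + (1 - l) * t' := ⟨_, rfl⟩
  have hspos : 0 < s := by
    rcases eq_or_lt_of_le h0 with h | h
    · rw [hs, ← h]; simpa using ht'
    · have := mul_pos h ht
      have := mul_nonneg h1' ht'.le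
      linarith
  have hsne := hspos.ne'
  have e1 : 1 - l * t / s = (1 - l) * t' / s := by
    field_simp
    linarith
  have hm : l * t / s ∈ Set.Icc (0:ℝ) 1 := by
    refine ⟨by positivity, ?_⟩
    have : 0 ≤ (1 - l) * t' / s := by positivity
    linarith
  have key := hlc (t⁻¹ • x) (t'⁻¹ • x') _ hm
  have ex : (l * t / s) • t⁻¹ • x + (1 - l * t / s) • t'⁻¹ • x'
      = s⁻¹ • (l • x + (1 - l) • x') := by
    rw [e1, smul_add, smul_smul, smul_smul, smul_smul, smul_smul]
    congr 2 <;> field_simp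
  rw [ex, e1] at key
  rw [← hs, hG, hG, hG]
  have ha := hg0 (t⁻¹ • x)
  have hb := hg0 (t'⁻¹ • x')
  generalize g (t⁻¹ • x) = a at *
  generalize g (t'⁻¹ • x') = b at *
  refine le_trans (le_of_eq ?_) (Real.rpow_le_rpow (by positivity) key hspos.le)
  rw [Real.mul_rpow (by positivity) (by positivity), Real.mul_rpow (by positivity) (by positivity),
    Real.mul_rpow (by positivity) (by positivity), Real.mul_rpow (by positivity) (by positivity),
    ← Real.rpow_mul ha, ← Real.rpow_mul hb, ← Real.rpow_mul ha, ← Real.rpow_mul hb,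
    ← Real.exp_mul, ← Real.exp_mul, ← Real.exp_mul, div_mul_cancel₀ _ hsne, div_mul_cancel₀ _ hsne,
    mul_comm t l, mul_comm t' (1 - l)]
  have e2 : -β * s = -β * t * l + -β * t' * (1 - l) := by rw [hs]; ring
  rw [e2, Real.exp_add]
  ring
end

section
/- Let n ≥ 1, β ≥ 0, and let g : ℝⁿ → [0,∞) be measurable and β-log-concave, and define G(x,t) := g(x/t)^t. Fix t, t' > 0 and λ ∈ (0,1), and assume x ↦ G(x,t) and x ↦ G(x,t') are integrable on ℝⁿ. Then ∫_{ℝⁿ} G(x, λt + (1−λ)t') dx ≥ ( ∫_{ℝⁿ} exp(−βt) G(x,t) dx )^λ · ( ∫_{ℝⁿ} exp(−βt') G(x,t') dx )^{1−λ}. -/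
open Real MeasureTheory

open scoped ENNReal Pointwise in
theorem bm_one (A B C : Set ℝ) (hA : MeasurableSet A) (hB : MeasurableSet B)
    (hA0 : A.Nonempty) (hB0 : B.Nonempty) (h : ∀ x ∈ A, ∀ y ∈ B, x + y ∈ C) :
    volume A + volume B ≤ volume C := by
  have key : ∀ K ⊆ A, IsCompact K → ∀ L ⊆ B, IsCompact L → volume K + volume L ≤ volume C := by
    intro K hKA hK L hLB hL
    obtain ⟨x0, hx0⟩ := hA0
    obtain ⟨y0, hy0⟩ := hB0
    have hK' : IsCompact (insert x0 K) := hK.insert x0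
    have hL' : IsCompact (insert y0 L) := hL.insert y0
    obtain ⟨m, hm, hmm⟩ := hK'.exists_isGreatest (Set.insert_nonempty _ _)
    obtain ⟨p, hp, hpp⟩ := hL'.exists_isLeast (Set.insert_nonempty _ _)
    have hKA' : insert x0 K ⊆ A := Set.insert_subset hx0 hKA
    have hLB' : insert y0 L ⊆ B := Set.insert_subset hy0 hLB
    have h1 : volume K ≤ volume ((fun x => x + p) '' (insert x0 K)) := by
      rw [Set.image_add_right, measure_preimage_add_right]
      exact measure_mono (Set.subset_insert _ _)
    have h2 : volume L ≤ volume ((fun x => m + x) '' (insert y0 L)) := by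
      rw [Set.image_add_left, measure_preimage_add]
      exact measure_mono (Set.subset_insert _ _)
    have hd : AEDisjoint volume ((fun x => x + p) '' (insert x0 K))
        ((fun x => m + x) '' (insert y0 L)) := by
      refine measure_mono_null (t := {m + p}) ?_ (by simp)
      rintro z ⟨⟨x, hx, rfl⟩, ⟨y, hy, hxy⟩⟩
      have := hmm hx
      have := hpp hy
      simp only [Set.mem_singleton_iff] at hxy ⊢
      linarith
    have hmeas : MeasurableSet ((fun x => m + x) '' (insert y0 L)) :=
      (hL'.image (by fun_prop)).isClosed.measurableSet
    calc volume K + volume L ≤ _ := add_le_add h1 h2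
      _ = _ := (measure_union₀ hmeas.nullMeasurableSet hd).symm
      _ ≤ volume C := by
        apply measure_mono
        rintro z (⟨x, hx, rfl⟩ | ⟨x, hx, rfl⟩)
        · exact h _ (hKA' hx) _ (hLB' hp)
        · exact h _ (hKA' hm) _ (hLB' hx)
  have key2 : ∀ L ⊆ B, IsCompact L → volume A + volume L ≤ volume C := by
    intro L hLB hL
    have h0 := key ∅ (Set.empty_subset _) isCompact_empty L hLB hL
    rw [measure_empty, zero_add] at h0
    refine add_le_of_le_tsub_right_of_le h0 ?_
    rw [hA.measure_eq_iSup_isCompact]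
    exact iSup_le fun K => iSup_le fun hKA => iSup_le fun hK =>
      ENNReal.le_sub_of_add_le_right hL.measure_lt_top.ne (key K hKA hK L hLB hL)
  have h0 := key2 ∅ (Set.empty_subset _) isCompact_empty
  rw [measure_empty, add_zero] at h0
  by_cases hAt : volume A = ⊤
  · rw [hAt, top_le_iff] at h0
    rw [h0]
    exact le_top
  refine add_le_of_le_tsub_left_of_le h0 ?_
  rw [hB.measure_eq_iSup_isCompact]
  exact iSup_le fun L => iSup_le fun hLB => iSup_le fun hL =>
    ENNReal.le_sub_of_add_le_left hAt (key2 L hLB hL)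

open scoped ENNReal Pointwise in
theorem bm_weighted (A B C : Set ℝ) (hA : MeasurableSet A) (hB : MeasurableSet B)
    (hA0 : A.Nonempty) (hB0 : B.Nonempty) (l : ℝ) (hl : 0 < l) (hl1 : l < 1)
    (h : ∀ x ∈ A, ∀ y ∈ B, l * x + (1 - l) * y ∈ C) :
    ENNReal.ofReal l * volume A + ENNReal.ofReal (1 - l) * volume B ≤ volume C := by
  have h1l : 0 < 1 - l := by linarith
  have := bm_one (l • A) ((1 - l) • B) C (hA.const_smul₀ l) (hB.const_smul₀ _) (hA0.smul_set)
    (hB0.smul_set) (by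
      rintro _ ⟨x, hx, rfl⟩ _ ⟨y, hy, rfl⟩
      exact h x hx y hy)
  rw [Measure.addHaar_smul, Measure.addHaar_smul] at this
  simpa [abs_of_pos hl, abs_of_pos h1l] using this

open scoped ENNReal in
theorem amgm (a b : ℝ≥0∞) (l : ℝ) (hl : 0 < l) (hl1 : l < 1) :
    a ^ l * b ^ (1 - l) ≤ ENNReal.ofReal l * a + ENNReal.ofReal (1 - l) * b := by
  have h1l : 0 < 1 - l := by linarith
  have hc : (l⁻¹).HolderConjugate (1 - l)⁻¹ := by
    rw [Real.holderConjugate_iff]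
    exact ⟨(one_lt_inv₀ hl).2 hl1, by simp⟩
  have := ENNReal.young_inequality (a ^ l) (b ^ (1 - l)) hc
  rw [← ENNReal.rpow_mul, ← ENNReal.rpow_mul, mul_inv_cancel₀ hl.ne', mul_inv_cancel₀ h1l.ne',
    ENNReal.rpow_one, ENNReal.rpow_one, ENNReal.ofReal_inv_of_pos hl,
    ENNReal.ofReal_inv_of_pos h1l, div_eq_mul_inv, div_eq_mul_inv, inv_inv, inv_inv] at this
  rwa [mul_comm _ a, mul_comm _ b]

open scoped ENNReal in
theorem layer (f : ℝ → ℝ≥0∞) (hf : Measurable f) (h1 : ∀ x, f x ≤ 1) :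
    ∫⁻ x, f x = ∫⁻ r in Set.Ioi (0:ℝ), volume {x | ENNReal.ofReal r < f x} := by
  have hfin : ∀ x, f x ≠ ∞ := fun x => ne_top_of_le_ne_top ENNReal.one_ne_top (h1 x)
  have := lintegral_eq_lintegral_meas_lt (f := fun x => (f x).toReal) volume
    (Filter.Eventually.of_forall fun x => ENNReal.toReal_nonneg) hf.ennreal_toReal.aemeasurable
  simp only [ENNReal.ofReal_toReal (hfin _)] at this
  rw [this]
  refine setLIntegral_congr_fun measurableSet_Ioi fun r hr => ?_
  simp only [ENNReal.ofReal_lt_iff_lt_toReal (le_of_lt hr) (hfin _)]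

open scoped ENNReal in
theorem pl_norm (f g h : ℝ → ℝ≥0∞) (hf : Measurable f) (hg : Measurable g) (hh : Measurable h)
    (l : ℝ) (hl : 0 < l) (hl1 : l < 1) (hfs : ⨆ x, f x = 1) (hgs : ⨆ x, g x = 1)
    (H : ∀ x y, f x ^ l * g y ^ (1 - l) ≤ h (l * x + (1 - l) * y)) :
    (∫⁻ x, f x) ^ l * (∫⁻ x, g x) ^ (1 - l) ≤ ∫⁻ x, h x := by
  have h1l : 0 < 1 - l := by linarith
  have hf1 : ∀ x, f x ≤ 1 := fun x => hfs ▸ le_iSup f x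
  have hg1 : ∀ x, g x ≤ 1 := fun x => hgs ▸ le_iSup g x
  refine (amgm _ _ l hl hl1).trans ?_
  refine le_trans ?_ (lintegral_mono (fun x => min_le_left (h x) 1))
  rw [layer f hf hf1, layer g hg hg1, layer _ (hh.min measurable_const) (fun x => min_le_right _ _),
    ← lintegral_const_mul' _ _ ENNReal.ofReal_ne_top,
    ← lintegral_const_mul' _ _ ENNReal.ofReal_ne_top]
  refine (le_lintegral_add _ _).trans ?_
  refine setLIntegral_mono' measurableSet_Ioi fun r hr => ?_
  by_cases hr1 : r < 1
  · have hr1' : ENNReal.ofReal r < 1 := by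
      rw [← ENNReal.ofReal_one]; exact (ENNReal.ofReal_lt_ofReal_iff one_pos).2 hr1
    apply bm_weighted _ _ _ (measurableSet_lt measurable_const hf)
      (measurableSet_lt measurable_const hg) _ _ l hl hl1
    · intro x hx y hy
      refine lt_min (lt_of_lt_of_le ?_ (H x y)) hr1'
      calc ENNReal.ofReal r = ENNReal.ofReal r ^ l * ENNReal.ofReal r ^ (1 - l) := by
            rw [← ENNReal.rpow_add_of_nonneg _ _ hl.le h1l.le]; simp
        _ < _ := ENNReal.mul_lt_mul (ENNReal.rpow_lt_rpow hx hl) (ENNReal.rpow_lt_rpow hy h1l)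
    · exact lt_iSup_iff.1 (hfs ▸ hr1')
    · exact lt_iSup_iff.1 (hgs ▸ hr1')
  · have hr1' : 1 ≤ ENNReal.ofReal r := by
      rw [← ENNReal.ofReal_one]; exact ENNReal.ofReal_le_ofReal (not_lt.1 hr1)
    have e1 : {x | ENNReal.ofReal r < f x} = ∅ := by
      ext x; simpa using (hf1 x).trans hr1'
    have e2 : {x | ENNReal.ofReal r < g x} = ∅ := by
      ext x; simpa using (hg1 x).trans hr1'
    simp [e1, e2]

open scoped ENNReal in
theorem pl_bdd (f g h : ℝ → ℝ≥0∞) (hf : Measurable f) (hg : Measurable g) (hh : Measurable h)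
    (l : ℝ) (hl : 0 < l) (hl1 : l < 1) (hfs : ⨆ x, f x ≠ ∞) (hgs : ⨆ x, g x ≠ ∞)
    (H : ∀ x y, f x ^ l * g y ^ (1 - l) ≤ h (l * x + (1 - l) * y)) :
    (∫⁻ x, f x) ^ l * (∫⁻ x, g x) ^ (1 - l) ≤ ∫⁻ x, h x := by
  have h1l : 0 < 1 - l := by linarith
  set a := ⨆ x, f x with ha
  set b := ⨆ x, g x with hb
  by_cases ha0 : a = 0
  · have : ∀ x, f x = 0 := by simpa [ha] using ha0
    simp [this, hl]
  by_cases hb0 : b = 0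
  · have : ∀ x, g x = 0 := by simpa [hb] using hb0
    simp [this, h1l]
  have e : (a⁻¹) ^ l * (b⁻¹) ^ (1 - l) ≠ 0 := by simp [hfs, hgs, ha0, hb0, hl, h1l, hl.le, h1l.le, hl.not_gt, h1l.not_gt]
  have e' : (a⁻¹) ^ l * (b⁻¹) ^ (1 - l) ≠ ∞ := by
    apply ENNReal.mul_ne_top <;> apply ENNReal.rpow_ne_top_of_nonneg <;> simp [hl.le, hl1.le, ha0, hb0]
  have := pl_norm (fun x => a⁻¹ * f x) (fun x => b⁻¹ * g x)
    (fun x => ((a⁻¹) ^ l * (b⁻¹) ^ (1 - l)) * h x) (hf.const_mul _) (hg.const_mul _)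
    (hh.const_mul _) l hl hl1
    (by rw [← ENNReal.mul_iSup]; exact ENNReal.inv_mul_cancel ha0 hfs)
    (by rw [← ENNReal.mul_iSup]; exact ENNReal.inv_mul_cancel hb0 hgs)
    (by
      intro x y
      rw [ENNReal.mul_rpow_of_nonneg _ _ hl.le, ENNReal.mul_rpow_of_nonneg _ _ h1l.le,
        mul_mul_mul_comm]
      gcongr
      exact H x y)
  rw [lintegral_const_mul _ hf, lintegral_const_mul _ hg, lintegral_const_mul _ hh,
    ENNReal.mul_rpow_of_nonneg _ _ hl.le, ENNReal.mul_rpow_of_nonneg _ _ h1l.le,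
    mul_mul_mul_comm] at this
  exact (ENNReal.mul_le_mul_iff_right e e').1 this

open scoped ENNReal Topology in
theorem trunc_tendsto (f : ℝ → ℝ≥0∞) (hf : Measurable f) :
    Filter.Tendsto (fun n : ℕ => ∫⁻ x, min (f x) n) Filter.atTop (𝓝 (∫⁻ x, f x)) := by
  apply lintegral_tendsto_of_tendsto_of_monotone
  · intro n; exact (hf.min measurable_const).aemeasurable
  · refine Filter.Eventually.of_forall fun x n m hnm => ?_
    dsimp only
    gcongr
  · refine Filter.Eventually.of_forall fun x => ?_
    have := (tendsto_const_nhds (x := f x) (f := Filter.atTop)).min ENNReal.tendsto_nat_nhds_top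
    simpa using this

open scoped ENNReal Topology in
theorem pl_one (f g h : ℝ → ℝ≥0∞) (hf : Measurable f) (hg : Measurable g) (hh : Measurable h)
    (l : ℝ) (hl : 0 < l) (hl1 : l < 1)
    (H : ∀ x y, f x ^ l * g y ^ (1 - l) ≤ h (l * x + (1 - l) * y)) :
    (∫⁻ x, f x) ^ l * (∫⁻ x, g x) ^ (1 - l) ≤ ∫⁻ x, h x := by
  have h1l : 0 < 1 - l := by linarith
  by_cases ha0 : ∫⁻ x, f x = 0
  · simp [ha0, hl]
  by_cases hb0 : ∫⁻ x, g x = 0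
  · simp [hb0, h1l]
  have t1 := (ENNReal.continuous_rpow_const (y := l)).tendsto _ |>.comp (trunc_tendsto f hf)
  have t2 := (ENNReal.continuous_rpow_const (y := 1 - l)).tendsto _ |>.comp (trunc_tendsto g hg)
  have t3 := ENNReal.Tendsto.mul t1 (Or.inl (by simp [ha0, hl.not_gt, hl.le])) t2
    (Or.inl (by simp [hb0, h1l.not_gt, hl1.le]))
  refine le_of_tendsto' t3 fun n => ?_
  have hb : ∀ u : ℝ → ℝ≥0∞, ⨆ x, min (u x) (n : ℝ≥0∞) ≠ ∞ := fun u =>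
    ne_top_of_le_ne_top (ENNReal.natCast_ne_top n) (iSup_le fun x => min_le_right _ _)
  refine pl_bdd _ _ h (hf.min measurable_const) (hg.min measurable_const) hh l hl hl1 (hb f) (hb g)
    fun x y => le_trans ?_ (H x y)
  gcongr <;> exact min_le_left _ _

open scoped ENNReal in
theorem lint_cons (n : ℕ) (f : (Fin (n + 1) → ℝ) → ℝ≥0∞) (hf : Measurable f) :
    ∫⁻ x, f x = ∫⁻ a : ℝ, ∫⁻ v : Fin n → ℝ, f (Fin.cons a v) := by
  have e := (volume_preserving_piFinSuccAbove (fun _ : Fin (n + 1) => ℝ) 0).symm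
  rw [← e.lintegral_comp hf, Measure.volume_eq_prod, lintegral_prod]
  · simp [MeasurableEquiv.piFinSuccAbove, Fin.insertNthEquiv]
  · exact (hf.comp (MeasurableEquiv.measurable _)).aemeasurable

theorem meas_cons (n : ℕ) : Measurable (fun p : ℝ × (Fin n → ℝ) => (Fin.cons p.1 p.2 : Fin (n + 1) → ℝ)) := by
  refine measurable_pi_iff.2 fun i => ?_
  refine Fin.cases ?_ (fun j => ?_) i
  · simpa using measurable_fst
  · simp only [Fin.cons_succ]
    exact (measurable_pi_apply j).comp measurable_snd

open scoped ENNReal in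
theorem pl (n : ℕ) (l : ℝ) (hl : 0 < l) (hl1 : l < 1) :
    ∀ (f g h : (Fin n → ℝ) → ℝ≥0∞) (_ : Measurable f) (_ : Measurable g) (_ : Measurable h)
    (_ : ∀ x y, f x ^ l * g y ^ (1 - l) ≤ h (l • x + (1 - l) • y)),
    (∫⁻ x, f x) ^ l * (∫⁻ x, g x) ^ (1 - l) ≤ ∫⁻ x, h x := by
  induction n with
  | zero =>
    intro f g h hf hg hh H
    rw [lintegral_unique, lintegral_unique, lintegral_unique]
    have := H default default
    rw [Subsingleton.elim (l • (default : Fin 0 → ℝ) + (1 - l) • default) default] at this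
    have hv : (volume : Measure (Fin 0 → ℝ)) Set.univ = 1 := by simp [volume_pi]
    rw [hv, mul_one, mul_one, mul_one]
    convert this using 3 <;> congr 1 <;> exact Subsingleton.elim _ _
  | succ n ih =>
    intro f g h hf hg hh H
    have mc := meas_cons n
    rw [lint_cons n f hf, lint_cons n g hg, lint_cons n h hh]
    have key : ∀ u : (Fin (n + 1) → ℝ) → ℝ≥0∞, Measurable u →
        Measurable fun a : ℝ => ∫⁻ v : Fin n → ℝ, u (Fin.cons a v) := fun u hu =>
      Measurable.lintegral_prod_right' (f := fun p : ℝ × (Fin n → ℝ) => u (Fin.cons p.1 p.2))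
        (hu.comp mc)
    have key2 : ∀ u : (Fin (n + 1) → ℝ) → ℝ≥0∞, Measurable u → ∀ a : ℝ,
        Measurable fun v : Fin n → ℝ => u (Fin.cons a v) := fun u hu a =>
      (hu.comp mc).comp measurable_prodMk_left
    refine pl_one _ _ _ (key f hf) (key g hg) (key h hh) l hl hl1 fun a b => ?_
    refine ih _ _ _ (key2 f hf a) (key2 g hg b) (key2 h hh _) fun x y => ?_
    refine (H _ _).trans (le_of_eq (congrArg h ?_))
    ext i
    refine Fin.cases ?_ (fun j => ?_) i <;> simp

/-- Integral Prékopa–Leindler-type inequality for `G(x,t) = g(x/t)^t` when `g` is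
measurable and `β`-log-concave. -/
theorem integral_G_ineq (n : ℕ) (hn : 1 ≤ n) (β : ℝ) (hβ : 0 ≤ β)
    (g : (Fin n → ℝ) → ℝ) (hgm : Measurable g) (hg0 : ∀ x, 0 ≤ g x)
    (hlc : ∀ x y : Fin n → ℝ, ∀ l : ℝ, l ∈ Set.Icc (0:ℝ) 1 →
      Real.exp (-β) * g x ^ l * g y ^ (1 - l) ≤ g (l • x + (1 - l) • y))
    (G : (Fin n → ℝ) → ℝ → ℝ) (hG : ∀ x t, G x t = g (t⁻¹ • x) ^ t)
    (t t' : ℝ) (ht : 0 < t) (ht' : 0 < t')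
    (l : ℝ) (hl : l ∈ Set.Ioo (0:ℝ) 1)
    (hint : Integrable (fun x => G x t))
    (hint' : Integrable (fun x => G x t')) :
    (∫⁻ x, ENNReal.ofReal (Real.exp (-β * t) * G x t)) ^ l *
      (∫⁻ x, ENNReal.ofReal (Real.exp (-β * t') * G x t')) ^ (1 - l)
      ≤ ∫⁻ x, ENNReal.ofReal (G x (l * t + (1 - l) * t')) := by
  obtain ⟨hl0, hl1⟩ := hl
  have h1l : 0 < 1 - l := by linarith
  have hGm : ∀ s, Measurable fun x => G x s := fun s => by
    simp only [hG]
    exact (hgm.comp (measurable_const_smul _)).pow_const s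
  have hG0 : ∀ x s, 0 ≤ G x s := fun x s => by rw [hG]; exact rpow_nonneg (hg0 _) _
  refine pl n l hl0 hl1 _ _ _ ((hGm t).const_mul _).ennreal_ofReal
    ((hGm t').const_mul _).ennreal_ofReal (hGm _).ennreal_ofReal fun x y => ?_
  have p1 : 0 ≤ Real.exp (-β * t) * G x t := mul_nonneg (exp_pos _).le (hG0 _ _)
  have p2 : 0 ≤ Real.exp (-β * t') * G y t' := mul_nonneg (exp_pos _).le (hG0 _ _)
  rw [ENNReal.ofReal_rpow_of_nonneg p1 hl0.le, ENNReal.ofReal_rpow_of_nonneg p2 h1l.le,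
    ← ENNReal.ofReal_mul (rpow_nonneg p1 _)]
  apply ENNReal.ofReal_le_ofReal
  set s := l * t + (1 - l) * t' with hs
  have hs0 : 0 < s := by positivity
  have hm : 1 - l * t / s = (1 - l) * t' / s := by
    field_simp; rw [hs]; ring
  have hm1 : 0 ≤ l * t / s := by positivity
  have hm2 : 0 ≤ (1 - l) * t' / s := by positivity
  have hp := hlc (t⁻¹ • x) (t'⁻¹ • y) (l * t / s) ⟨hm1, by linarith⟩
  rw [hm] at hp
  have hpt : (l * t / s) • (t⁻¹ • x) + ((1 - l) * t' / s) • (t'⁻¹ • y)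
      = s⁻¹ • (l • x + (1 - l) • y) := by
    rw [smul_add, smul_smul, smul_smul, smul_smul, smul_smul]
    congr 2 <;> field_simp
  rw [hpt] at hp
  have q1 := hg0 (t⁻¹ • x)
  have q2 := hg0 (t'⁻¹ • y)
  have hq := rpow_le_rpow (by positivity) hp hs0.le
  rw [hG, hG, hG]
  refine le_trans (le_of_eq ?_) hq
  rw [mul_rpow (by positivity) (by positivity), mul_rpow (by positivity) (by positivity),
    mul_rpow (by positivity) (by positivity), mul_rpow (by positivity) (by positivity),
    ← rpow_mul q1, ← rpow_mul q2, ← rpow_mul q1, ← rpow_mul q2, ← Real.exp_mul, ← Real.exp_mul,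
    ← Real.exp_mul, div_mul_cancel₀ _ hs0.ne', div_mul_cancel₀ _ hs0.ne', mul_comm t l,
    mul_comm t' (1 - l), mul_mul_mul_comm, ← Real.exp_add, mul_assoc (Real.exp _)]
  congr 2
  rw [hs]; ring
end
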